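/- Low-frequency expansion of the iteration matrix entries for the asymptotically optimized one-sided Robin parameter: Let C > 0 and for δ > 0 set p(δ) := (C²/2) δ^{-1/3}. Define, with λ = s := λ(k_min), D(δ) := (λ+p(δ))² e^{λ(L+δ)} − (λ−p(δ))² e^{−λ(L+δ)}, α(δ) := ((λ+p(δ))² e^{λδ} − (λ−p(δ))² e^{−λδ})/D(δ) and β(δ) := (λ² − p(δ)²)(e^{−λL} − e^{λL})/D(δ). Then, as δ → 0⁺, α(δ) = (8 s e^{−sL} / (C² (1 − e^{−2sL}))) δ^{1/3} + O(δ^{2/3}) and β(δ) = 1 − (4 s (e^{−2sL} + 1) / (C² (1 − e^{−2sL}))) δ^{1/3} + O(δ^{2/3}) (Big-O in complex modulus). -/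

import Mathlib

open Complex Real Asymptotics Topology Filter

/-- The complex square root with positive real part of `k² + η - iε`. -/
noncomputable def lam (η ε k : ℝ) : ℂ :=
  (((k ^ 2 + η : ℝ) : ℂ) - (ε : ℂ) * Complex.I) ^ ((1 : ℂ) / 2)

/-- Low-frequency entry `α(δ)` for Robin parameter `p(δ)`, evaluated at the
minimal frequency (`λ = s`). -/
noncomputable def alphaLF (s : ℂ) (L δ p : ℝ) : ℂ :=
  ((s + (p : ℂ)) ^ 2 * Complex.exp (s * (δ : ℂ))
      - (s - (p : ℂ)) ^ 2 * Complex.exp (-(s * (δ : ℂ))))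
    / ((s + (p : ℂ)) ^ 2 * Complex.exp (s * ((L : ℂ) + (δ : ℂ)))
      - (s - (p : ℂ)) ^ 2 * Complex.exp (-(s * ((L : ℂ) + (δ : ℂ)))))

/-- Low-frequency entry `β(δ)` for Robin parameter `p(δ)`, evaluated at the
minimal frequency (`λ = s`). -/
noncomputable def betaLF (s : ℂ) (L δ p : ℝ) : ℂ :=
  ((s ^ 2 - (p : ℂ) ^ 2)
      * (Complex.exp (-(s * (L : ℂ))) - Complex.exp (s * (L : ℂ))))
    / ((s + (p : ℂ)) ^ 2 * Complex.exp (s * ((L : ℂ) + (δ : ℂ)))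
      - (s - (p : ℂ)) ^ 2 * Complex.exp (-(s * ((L : ℂ) + (δ : ℂ)))))

/-!
In the variable `w = δ^{1/3}`, for which `δ = w³` and `p = c / w`, multiplying the numerators and
denominators of `α` and `β` by `w²` makes them entire in `w`, and the common denominator takes the
value `2 c² sinh (s L) ≠ 0` at `w = 0`. Both entries are therefore analytic at `w = 0`, and the
expansions are their first-order Taylor formulas there.
-/

lemma isBigO_taylor_one_of_analyticAt {𝕜 E : Type*} [NontriviallyNormedField 𝕜]
    [NormedAddCommGroup E] [NormedSpace 𝕜 E] {f : 𝕜 → E} {f' : E} {x : 𝕜}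
    (hf : AnalyticAt 𝕜 f x) (hf' : HasDerivAt f f' x) :
    (fun y => f (x + y) - (f x + y • f')) =O[𝓝 0] (fun y => y ^ 2) := by
  obtain ⟨q, hq⟩ := hf
  have hlinear (y : 𝕜) : q.partialSum 2 y = f x + y • f' := by
    have hconst : q 0 (fun _ => y) = f x := hq.coeff_zero _
    have hderiv : q 1 (fun _ => y) = y • f' := by
      rw [hf'.unique hq.hasDerivAt]
      simp
    rw [FormalMultilinearSeries.partialSum, Finset.sum_range_succ, Finset.sum_range_one,
      hconst, hderiv]
  refine IsBigO.of_norm_right ?_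
  simpa only [hlinear, norm_pow] using hq.isBigO_sub_partialSum_pow 2

lemma isBigO_taylor_one_comp_rpow {F : Type*} [NormedAddCommGroup F] [NormedSpace ℂ F]
    {f : ℂ → F} {f' : F} (hf : AnalyticAt ℂ f 0) (hf' : HasDerivAt f f' 0) {r : ℝ} (hr : 0 < r) :
    (fun δ : ℝ => f ((δ ^ r : ℝ) : ℂ) - (f 0 + ((δ ^ r : ℝ) : ℂ) • f'))
      =O[𝓝[>] 0] (fun δ : ℝ => δ ^ (r * 2)) := by
  have hlim : Tendsto (fun δ : ℝ => ((δ ^ r : ℝ) : ℂ)) (𝓝[>] 0) (𝓝 0) := by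
    have hcont : ContinuousAt (fun δ : ℝ => ((δ ^ r : ℝ) : ℂ)) 0 :=
      continuous_ofReal.continuousAt.comp (Real.continuousAt_rpow_const 0 r (Or.inr hr.le))
    simpa [Real.zero_rpow hr.ne'] using hcont.tendsto.mono_left nhdsWithin_le_nhds
  refine (((isBigO_taylor_one_of_analyticAt hf hf').comp_tendsto hlim).norm_right).congr' ?_ ?_
  · exact .of_forall fun δ => by simp only [Function.comp_apply, zero_add]
  · filter_upwards [self_mem_nhdsWithin] with δ (hδ : 0 < δ)
    rw [Function.comp_apply, norm_pow, norm_real, Real.norm_of_nonneg (by positivity),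
      Real.rpow_mul hδ.le, Real.rpow_two]

/-- Up to sign, the determinant of the Robin problem `-u' + p u` at `0`, `u' + p u` at `x`, in the
basis `e^{st}`, `e^{-st}` of solutions of `u'' = s² u`. At `x = L + δ` it is the common denominator
`D(δ)` of `α` and `β`, and at `x = δ` the numerator of `α`. -/
noncomputable def robinDet (s p x : ℂ) : ℂ :=
  (s + p) ^ 2 * Complex.exp (s * x) - (s - p) ^ 2 * Complex.exp (-(s * x))

/-- The determinant `w² * robinDet s (c / w) (x + w³)` in the scaling `p = c / w`, `δ = w³`,
written in hyperbolic form so that it is defined, and entire, across `w = 0`. -/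
noncomputable def scaledRobinDet (s c x w : ℂ) : ℂ :=
  2 * ((s * w) ^ 2 + c ^ 2) * Complex.sinh (s * (x + w ^ 3))
    + 4 * s * c * w * Complex.cosh (s * (x + w ^ 3))

section RobinDet

variable (s c x : ℂ)

lemma robinDet_eq_sinh_cosh (p : ℂ) :
    robinDet s p x
      = 2 * (s ^ 2 + p ^ 2) * Complex.sinh (s * x) + 4 * s * p * Complex.cosh (s * x) := by
  rw [robinDet, Complex.sinh, Complex.cosh]
  ring

lemma robinDet_div_eq_scaledRobinDet {w : ℂ} (hw : w ≠ 0) :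
    robinDet s (c / w) (x + w ^ 3) = scaledRobinDet s c x w / w ^ 2 := by
  rw [robinDet_eq_sinh_cosh, scaledRobinDet]
  field_simp

lemma scaledRobinDet_zero : scaledRobinDet s c x 0 = 2 * c ^ 2 * Complex.sinh (s * x) := by
  simp [scaledRobinDet]

lemma analyticAt_scaledRobinDet (w : ℂ) : AnalyticAt ℂ (scaledRobinDet s c x) w := by
  have hentire : Differentiable ℂ (scaledRobinDet s c x) := by
    unfold scaledRobinDet
    fun_prop
  exact hentire.analyticAt w

lemma hasDerivAt_scaledRobinDet_zero :
    HasDerivAt (scaledRobinDet s c x) (4 * s * c * Complex.cosh (s * x)) 0 := by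
  have hid := hasDerivAt_id (0 : ℂ)
  have harg : HasDerivAt (fun w : ℂ => s * (x + w ^ 3)) 0 0 := by
    simpa using ((hid.pow 3).const_add x).const_mul s
  have hquad : HasDerivAt (fun w : ℂ => 2 * ((s * w) ^ 2 + c ^ 2)) 0 0 := by
    simpa using (((hid.const_mul s).pow 2).add_const (c ^ 2)).const_mul 2
  have hlin : HasDerivAt (fun w : ℂ => 4 * s * c * w) (4 * s * c) 0 := by
    simpa using hid.const_mul (4 * s * c)
  exact ((hquad.mul harg.csinh).add (hlin.mul harg.ccosh)).congr_deriv (by simp)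

end RobinDet

lemma scaledRobinDet_zero_ne_zero {s c x : ℂ} (hc : c ≠ 0) (hsinh : Complex.sinh (s * x) ≠ 0) :
    scaledRobinDet s c x 0 ≠ 0 := by
  rw [scaledRobinDet_zero]
  exact mul_ne_zero (mul_ne_zero two_ne_zero (pow_ne_zero 2 hc)) hsinh

lemma alphaLF_eq_scaledRobinDet (s : ℂ) (L c : ℝ) {w : ℝ} (hw : w ≠ 0) :
    alphaLF s L (w ^ 3) (c / w) = scaledRobinDet s c 0 w / scaledRobinDet s c L w := by
  have hw' : (w : ℂ) ≠ 0 := ofReal_ne_zero.mpr hw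
  calc alphaLF s L (w ^ 3) (c / w)
      = robinDet s (c / w) (0 + w ^ 3) / robinDet s (c / w) (L + w ^ 3) := by
        simp only [alphaLF, robinDet, ofReal_div, ofReal_pow, zero_add]
    _ = scaledRobinDet s c 0 w / scaledRobinDet s c L w := by
        rw [robinDet_div_eq_scaledRobinDet s c 0 hw', robinDet_div_eq_scaledRobinDet s c L hw',
          div_div_div_cancel_right₀ (pow_ne_zero 2 hw')]

lemma betaLF_eq_scaledRobinDet (s : ℂ) (L c : ℝ) {w : ℝ} (hw : w ≠ 0) :
    betaLF s L (w ^ 3) (c / w)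
      = 2 * (c ^ 2 - (s * w) ^ 2) * Complex.sinh (s * L) / scaledRobinDet s c L w := by
  have hw' : (w : ℂ) ≠ 0 := ofReal_ne_zero.mpr hw
  have hnum : (s ^ 2 - (c / w : ℂ) ^ 2) * (Complex.exp (-(s * L)) - Complex.exp (s * L))
      = 2 * (c ^ 2 - (s * w) ^ 2) * Complex.sinh (s * L) / w ^ 2 := by
    rw [Complex.sinh]
    field_simp
    ring
  calc betaLF s L (w ^ 3) (c / w)
      = (s ^ 2 - (c / w : ℂ) ^ 2) * (Complex.exp (-(s * L)) - Complex.exp (s * L))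
          / robinDet s (c / w) (L + w ^ 3) := by
        simp only [betaLF, robinDet, ofReal_div, ofReal_pow]
    _ = 2 * (c ^ 2 - (s * w) ^ 2) * Complex.sinh (s * L) / scaledRobinDet s c L w := by
        rw [hnum, robinDet_div_eq_scaledRobinDet s c L hw',
          div_div_div_cancel_right₀ (pow_ne_zero 2 hw')]

lemma eventually_exists_cubeRoot (c : ℝ) :
    ∀ᶠ δ : ℝ in 𝓝[>] 0, ∃ w : ℝ, w ≠ 0 ∧ δ ^ ((1 : ℝ) / 3) = w ∧ δ = w ^ 3 ∧
      c * δ ^ (-(1 : ℝ) / 3) = c / w := by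
  filter_upwards [self_mem_nhdsWithin] with δ (hδ : 0 < δ)
  refine ⟨δ ^ ((1 : ℝ) / 3), (Real.rpow_pos_of_pos hδ _).ne', rfl, ?_, ?_⟩
  · rw [← Real.rpow_mul_natCast hδ.le]
    norm_num
  · rw [neg_div, Real.rpow_neg hδ.le, ← div_eq_mul_inv]

section Expansion

variable {s : ℂ} {L c : ℝ}

lemma alphaLF_sub_isBigO (hc : c ≠ 0) (hsinh : Complex.sinh (s * L) ≠ 0) :
    (fun δ : ℝ => alphaLF s L δ (c * δ ^ (-(1 : ℝ) / 3))
        - 2 * s / (c * Complex.sinh (s * L)) * ((δ ^ ((1 : ℝ) / 3) : ℝ) : ℂ))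
      =O[𝓝[>] (0 : ℝ)] (fun δ : ℝ => δ ^ ((2 : ℝ) / 3)) := by
  have hc' : (c : ℂ) ≠ 0 := ofReal_ne_zero.mpr hc
  have hdet := scaledRobinDet_zero_ne_zero hc' hsinh
  have hnum : scaledRobinDet s c 0 0 = 0 := by simp [scaledRobinDet_zero]
  have hanalytic := (analyticAt_scaledRobinDet s c 0 0).div (analyticAt_scaledRobinDet s c L 0) hdet
  have hderiv : HasDerivAt (scaledRobinDet s c 0 / scaledRobinDet s c L)
      (2 * s / (c * Complex.sinh (s * L))) 0 := by
    refine ((hasDerivAt_scaledRobinDet_zero s c 0).div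
      (hasDerivAt_scaledRobinDet_zero s c L) hdet).congr_deriv ?_
    rw [hnum, scaledRobinDet_zero, mul_zero, Complex.cosh_zero]
    field_simp
    ring
  refine (isBigO_taylor_one_comp_rpow hanalytic hderiv (r := 1 / 3) (by norm_num)).congr' ?_ ?_
  · filter_upwards [eventually_exists_cubeRoot c] with δ ⟨w, hw, hroot, hcube, hp⟩
    rw [hp, hroot, hcube, alphaLF_eq_scaledRobinDet s L c hw]
    simp only [Pi.div_apply, hnum, zero_div, zero_add, smul_eq_mul, mul_comm (w : ℂ)]
  · exact .of_forall fun δ => by norm_num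

lemma betaLF_sub_isBigO (hc : c ≠ 0) (hsinh : Complex.sinh (s * L) ≠ 0) :
    (fun δ : ℝ => betaLF s L δ (c * δ ^ (-(1 : ℝ) / 3))
        - (1 - 2 * s * Complex.cosh (s * L) / (c * Complex.sinh (s * L))
          * ((δ ^ ((1 : ℝ) / 3) : ℝ) : ℂ)))
      =O[𝓝[>] (0 : ℝ)] (fun δ : ℝ => δ ^ ((2 : ℝ) / 3)) := by
  have hc' : (c : ℂ) ≠ 0 := ofReal_ne_zero.mpr hc
  have hdet := scaledRobinDet_zero_ne_zero hc' hsinh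
  let num : ℂ → ℂ := fun w => 2 * (c ^ 2 - (s * w) ^ 2) * Complex.sinh (s * L)
  have hnum : num 0 = scaledRobinDet s c L 0 := by simp [num, scaledRobinDet_zero]
  have hnum' : HasDerivAt num 0 0 := by
    simpa using (((((hasDerivAt_id (0 : ℂ)).const_mul s).pow 2).const_sub
      ((c : ℂ) ^ 2)).const_mul 2).mul_const (Complex.sinh (s * L))
  have hanalytic : AnalyticAt ℂ (num / scaledRobinDet s c L) 0 :=
    AnalyticAt.div (by fun_prop) (analyticAt_scaledRobinDet s c L 0) hdet
  have hderiv : HasDerivAt (num / scaledRobinDet s c L)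
      (-(2 * s * Complex.cosh (s * L) / (c * Complex.sinh (s * L)))) 0 := by
    refine (hnum'.div (hasDerivAt_scaledRobinDet_zero s c L) hdet).congr_deriv ?_
    rw [hnum, scaledRobinDet_zero]
    field_simp
    ring
  refine (isBigO_taylor_one_comp_rpow hanalytic hderiv (r := 1 / 3) (by norm_num)).congr' ?_ ?_
  · filter_upwards [eventually_exists_cubeRoot c] with δ ⟨w, hw, hroot, hcube, hp⟩
    rw [hp, hroot, hcube, betaLF_eq_scaledRobinDet s L c hw]
    simp only [Pi.div_apply, hnum, div_self hdet, smul_eq_mul, num]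
    ring
  · exact .of_forall fun δ => by norm_num

end Expansion

lemma one_sub_exp_neg_two_mul (z : ℂ) :
    1 - Complex.exp (-(2 * z)) = 2 * Complex.exp (-z) * Complex.sinh z := by
  rw [mul_right_comm, Complex.two_sinh, sub_mul, ← Complex.exp_add, ← Complex.exp_add,
    add_neg_cancel, Complex.exp_zero, ← neg_add, two_mul]

lemma exp_neg_two_mul_add_one (z : ℂ) :
    Complex.exp (-(2 * z)) + 1 = 2 * Complex.exp (-z) * Complex.cosh z := by
  rw [mul_right_comm, Complex.two_cosh, add_mul, ← Complex.exp_add, ← Complex.exp_add,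
    add_neg_cancel, Complex.exp_zero, ← neg_add, two_mul, add_comm]

lemma exp_ne_one_of_re_pos {z : ℂ} (hz : 0 < z.re) : Complex.exp z ≠ 1 := by
  intro h
  have hnorm : Real.exp z.re = 1 := by rw [← Complex.norm_exp, h, norm_one]
  exact hz.ne' ((Real.exp_eq_one_iff _).mp hnorm)

lemma exp_two_mul_mul_ofReal_ne_one {s : ℂ} {L : ℝ} (hs : 0 < s.re) (hL : 0 < L) :
    Complex.exp (2 * s * L) ≠ 1 := by
  have hre : (2 * s * L).re = 2 * s.re * L := by
    rw [re_mul_ofReal, mul_re, re_ofNat, im_ofNat, zero_mul, sub_zero]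
  exact exp_ne_one_of_re_pos (hre ▸ by positivity)

lemma sinh_ne_zero_of_exp_two_mul_ne_one {z : ℂ} (hz : Complex.exp (2 * z) ≠ 1) :
    Complex.sinh z ≠ 0 := by
  intro h
  have hexp := one_sub_exp_neg_two_mul z
  rw [h, mul_zero, sub_eq_zero, Complex.exp_neg, eq_comm, inv_eq_one] at hexp
  exact hz hexp

lemma lam_re_pos {η k : ℝ} (h : 0 < k ^ 2 + η) (ε : ℝ) : 0 < (lam η ε k).re := by
  have hre : (((k ^ 2 + η : ℝ) : ℂ) - ε * Complex.I).re = k ^ 2 + η := by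
    rw [sub_re, ofReal_re, re_ofReal_mul, I_re, mul_zero, sub_zero]
  rw [lam, one_div, cpow_inv_two_re, hre]
  positivity

theorem low_frequency_entry_expansion_general {s : ℂ} {L C : ℝ} (hC : C ≠ 0)
    (hs : Complex.exp (2 * s * L) ≠ 1) :
    (fun δ : ℝ => alphaLF s L δ (C ^ 2 / 2 * δ ^ (-(1 : ℝ) / 3))
        - (8 * s * Complex.exp (-(s * (L : ℂ)))
            / ((C : ℂ) ^ 2 * (1 - Complex.exp (-(2 * s * (L : ℂ))))))
          * ((δ ^ ((1 : ℝ) / 3) : ℝ) : ℂ))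
      =O[𝓝[>] (0 : ℝ)] (fun δ : ℝ => δ ^ ((2 : ℝ) / 3)) ∧
    (fun δ : ℝ => betaLF s L δ (C ^ 2 / 2 * δ ^ (-(1 : ℝ) / 3))
        - (1 - (4 * s * (Complex.exp (-(2 * s * (L : ℂ))) + 1)
            / ((C : ℂ) ^ 2 * (1 - Complex.exp (-(2 * s * (L : ℂ))))))
          * ((δ ^ ((1 : ℝ) / 3) : ℝ) : ℂ)))
      =O[𝓝[>] (0 : ℝ)] (fun δ : ℝ => δ ^ ((2 : ℝ) / 3)) := by
  have hc : C ^ 2 / 2 ≠ 0 := by positivity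
  rw [mul_assoc] at hs
  have hsinh := sinh_ne_zero_of_exp_two_mul_ne_one hs
  have hα : 8 * s * Complex.exp (-(s * L)) / ((C : ℂ) ^ 2 * (1 - Complex.exp (-(2 * s * L))))
      = 2 * s / ((C ^ 2 / 2 : ℝ) * Complex.sinh (s * L)) := by
    rw [mul_assoc 2 s, one_sub_exp_neg_two_mul]
    push_cast
    field_simp
    ring
  have hβ : 4 * s * (Complex.exp (-(2 * s * L)) + 1)
        / ((C : ℂ) ^ 2 * (1 - Complex.exp (-(2 * s * L))))
      = 2 * s * Complex.cosh (s * L) / ((C ^ 2 / 2 : ℝ) * Complex.sinh (s * L)) := by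
    rw [mul_assoc 2 s, one_sub_exp_neg_two_mul, exp_neg_two_mul_add_one]
    push_cast
    field_simp
    ring
  rw [hα, hβ]
  exact ⟨alphaLF_sub_isBigO hc hsinh, betaLF_sub_isBigO hc hsinh⟩

/-- Low-frequency expansion of the iteration matrix entries for the
asymptotically optimized one-sided Robin parameter `p(δ) = (C²/2) δ^{-1/3}`:
as `δ → 0⁺`,
`α(δ) = (8 s e^{-sL} / (C² (1 - e^{-2sL}))) δ^{1/3} + O(δ^{2/3})` and
`β(δ) = 1 - (4 s (e^{-2sL} + 1) / (C² (1 - e^{-2sL}))) δ^{1/3} + O(δ^{2/3})`. -/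
theorem low_frequency_entry_expansion
    (η ε L kmin C : ℝ) (hη : 0 < η) (hε : 0 < ε) (hL : 0 < L)
    (hkmin : 0 < kmin) (hC : 0 < C) (s : ℂ) (hs : s = lam η ε kmin) :
    (fun δ : ℝ => alphaLF s L δ (C ^ 2 / 2 * δ ^ (-(1 : ℝ) / 3))
        - (8 * s * Complex.exp (-(s * (L : ℂ)))
            / ((C : ℂ) ^ 2 * (1 - Complex.exp (-(2 * s * (L : ℂ))))))
          * ((δ ^ ((1 : ℝ) / 3) : ℝ) : ℂ))
      =O[𝓝[>] (0 : ℝ)] (fun δ : ℝ => δ ^ ((2 : ℝ) / 3)) ∧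
    (fun δ : ℝ => betaLF s L δ (C ^ 2 / 2 * δ ^ (-(1 : ℝ) / 3))
        - (1 - (4 * s * (Complex.exp (-(2 * s * (L : ℂ))) + 1)
            / ((C : ℂ) ^ 2 * (1 - Complex.exp (-(2 * s * (L : ℂ))))))
          * ((δ ^ ((1 : ℝ) / 3) : ℝ) : ℂ)))
      =O[𝓝[>] (0 : ℝ)] (fun δ : ℝ => δ ^ ((2 : ℝ) / 3)) := by
  have hre : 0 < s.re := hs ▸ lam_re_pos (by positivity) ε
  exact low_frequency_entry_expansion_general hC.ne' (exp_two_mul_mul_ofReal_ne_one hre hL)
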